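/- For every dimension d ≥ 1 there exists a constant C > 0 depending only on d with the following property: for all 0 < ε ≤ δ, every x₀ ∈ ℝ^d, and every continuously differentiable function z on a neighborhood of the closed cube I_δ := x₀ + δ·[−1/2,1/2]^d with ∫_{I_δ} z dx = 0, one has ∫_{I_δ ∖ I_{δ−ε}} z² dx ≤ C ε δ ∫_{I_δ} |∇z|² dx, where I_{δ−ε} := x₀ + (δ−ε)·[−1/2,1/2]^d is the concentric cube of side δ−ε. -/

import Mathlib

open MeasureTheory

noncomputable section

/-- The cube `x₀ + r·[-1/2,1/2]^d`. -/
def cube (d : ℕ) (x₀ : Fin d → ℝ) (r : ℝ) : Set (Fin d → ℝ) :=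
  {x | ∀ i, |x i - x₀ i| ≤ r / 2}

/-- The gradient of `v : ℝ^d → ℝ`. -/
def grad (d : ℕ) (v : (Fin d → ℝ) → ℝ) (x : Fin d → ℝ) : Fin d → ℝ :=
  fun i => fderiv ℝ v x (Pi.single i 1)

open scoped ENNReal

lemma bst_cs (a b : ℝ) (hab : a < b) (h : ℝ → ℝ) (hh : Continuous h) (s t : ℝ)
    (hs : s ∈ Set.Icc a b) (ht : t ∈ Set.Icc a b) :
    (∫ u in s..t, h u) ^ 2 ≤ (b - a) * ∫ u in Set.Icc a b, h u ^ 2 := by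
  have i1 : IntegrableOn (fun u => |h u|) (Set.Icc a b) :=
    (hh.abs.continuousOn).integrableOn_Icc
  have i2 : IntegrableOn (fun u => h u ^ 2) (Set.Icc a b) :=
    ((hh.pow 2).continuousOn).integrableOn_Icc
  have h1 : |∫ u in s..t, h u| ≤ ∫ u in Set.Icc a b, |h u| := by
    rw [← Real.norm_eq_abs]
    refine (intervalIntegral.norm_integral_le_integral_norm_uIoc (f := h)).trans ?_
    refine setIntegral_mono_set i1 (Filter.Eventually.of_forall fun u => abs_nonneg _) ?_
    exact (Set.uIoc_subset_uIcc.trans (Set.uIcc_subset_Icc hs ht)).eventuallyLE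
  set A := ∫ u in Set.Icc a b, |h u| with hA
  set m := A / (b - a) with hm
  have hba : 0 < b - a := by linarith
  have h2 : 0 ≤ ∫ u in Set.Icc a b, (|h u| - m) ^ 2 := integral_nonneg fun u => sq_nonneg _
  have h3 : ∫ u in Set.Icc a b, (|h u| - m) ^ 2
      = (∫ u in Set.Icc a b, h u ^ 2) - 2 * m * A + m ^ 2 * (b - a) := by
    have : ∀ u, (|h u| - m) ^ 2 = h u ^ 2 - 2 * m * |h u| + m ^ 2 := by
      intro u; rw [sub_sq, sq_abs]; ring
    simp only [this]
    have i4 : IntegrableOn (fun u => h u ^ 2 - 2 * m * |h u|) (Set.Icc a b) :=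
      i2.sub (i1.const_mul _)
    have i3 : IntegrableOn (fun _ => m ^ 2) (Set.Icc a b) := by simp
    rw [integral_add i4 i3, integral_sub i2 (i1.const_mul _),
      integral_const_mul]
    simp [hba.le]; ring
  rw [h3] at h2
  have h4 : m * (b - a) = A := by rw [hm]; field_simp
  have h5 : A ^ 2 ≤ (b - a) * ∫ u in Set.Icc a b, h u ^ 2 := by
    have := mul_nonneg hba.le h2
    rw [← h4] at this ⊢
    nlinarith
  calc _ = |∫ u in s..t, h u| ^ 2 := (sq_abs _).symm
    _ ≤ A ^ 2 := by gcongr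
    _ ≤ _ := h5

/-- One-dimensional factor measures of the cube. -/
def bstMu {d : ℕ} (x₀ : Fin d → ℝ) (δ : ℝ) (i : Fin d) : Measure ℝ :=
  volume.restrict (Set.Icc (x₀ i - δ / 2) (x₀ i + δ / 2))

instance {d : ℕ} (x₀ : Fin d → ℝ) (δ : ℝ) (i : Fin d) : IsFiniteMeasure (bstMu x₀ δ i) := by
  unfold bstMu; infer_instance

lemma bstMu_univ {d : ℕ} (x₀ : Fin d → ℝ) (δ : ℝ) (i : Fin d) :
    bstMu x₀ δ i Set.univ = ENNReal.ofReal δ := by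
  simp [bstMu]

lemma bst_cube_eq {d : ℕ} (x₀ : Fin d → ℝ) (δ : ℝ) :
    cube d x₀ δ = Set.univ.pi fun i => Set.Icc (x₀ i - δ / 2) (x₀ i + δ / 2) := by
  ext x
  simp only [cube, Set.mem_ofPred_eq, Set.mem_pi, Set.mem_univ, true_imp_iff, Set.mem_Icc, abs_le]
  exact forall_congr' fun i => by constructor <;> rintro ⟨h1, h2⟩ <;> constructor <;> linarith

lemma bst_pi_eq {d : ℕ} (x₀ : Fin d → ℝ) (δ : ℝ) :
    Measure.pi (bstMu x₀ δ) = volume.restrict (cube d x₀ δ) := by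
  rw [bst_cube_eq, volume_pi, Measure.restrict_pi_pi]; rfl

lemma bst_cube_meas {d : ℕ} (x₀ : Fin d → ℝ) (δ : ℝ) : MeasurableSet (cube d x₀ δ) := by
  rw [bst_cube_eq]; exact MeasurableSet.univ_pi fun i => measurableSet_Icc

lemma bst_cube_compact {d : ℕ} (x₀ : Fin d → ℝ) (δ : ℝ) : IsCompact (cube d x₀ δ) := by
  rw [bst_cube_eq]; exact isCompact_univ_pi fun i => isCompact_Icc

/-- Fubini in one coordinate, with a weight. -/
lemma bst_fubini {d : ℕ} (μ : Fin d → Measure ℝ) [∀ i, IsFiniteMeasure (μ i)] (i : Fin d)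
    (φ : ℝ → ℝ≥0∞) (hφ : Measurable φ) (g : (Fin d → ℝ) → ℝ≥0∞) (hg : Measurable g) :
    ∫⁻ x, φ (x i) * (∫⁻ t, g (Function.update x i t) ∂(μ i)) ∂(Measure.pi μ)
      = (∫⁻ t, φ t ∂(μ i)) * ∫⁻ x, g x ∂(Measure.pi μ) := by
  classical
  have hK : Measurable (fun x : Fin d → ℝ => ∫⁻ t, g (Function.update x i t) ∂(μ i)) := by
    have := hg.lmarginal μ (s := {i})
    rwa [show (∫⋯∫⁻_{i}, g ∂μ) = fun x => ∫⁻ t, g (Function.update x i t) ∂(μ i) from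
      lmarginal_singleton g i] at this
  have hF : Measurable (fun x : Fin d → ℝ =>
      φ (x i) * (∫⁻ t, g (Function.update x i t) ∂(μ i))) :=
    (hφ.comp (measurable_pi_apply i)).mul hK
  have key : (∫⋯∫⁻_{i}, (fun x : Fin d → ℝ =>
      φ (x i) * (∫⁻ t, g (Function.update x i t) ∂(μ i))) ∂μ)
      = ∫⋯∫⁻_{i}, (fun x => (∫⁻ t, φ t ∂(μ i)) * g x) ∂μ := by
    rw [lmarginal_singleton, lmarginal_singleton]
    funext x
    have hgu : Measurable fun t => g (Function.update x i t) := hg.comp (measurable_update x)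
    simp only [Function.update_self, Function.update_idem]
    rw [lintegral_mul_const _ hφ, lintegral_const_mul _ hgu]
  have := lmarginal_eq_of_subset (Finset.subset_univ {i}) hF (hg.const_mul _) key
  rw [lmarginal_univ, lmarginal_univ] at this
  have := congrFun this (fun _ => 0)
  rw [this, lintegral_const_mul _ hg]

lemma bst_K_meas {d : ℕ} (μ : Fin d → Measure ℝ) [∀ i, IsFiniteMeasure (μ i)] (i : Fin d)
    (g : (Fin d → ℝ) → ℝ≥0∞) (hg : Measurable g) :
    Measurable (fun x : Fin d → ℝ => ∫⁻ t, g (Function.update x i t) ∂(μ i)) := by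
  have := hg.lmarginal μ (s := {i})
  rwa [lmarginal_singleton] at this

/-- Swapping a set of coordinates preserves the product measure. -/
lemma bst_swap {d : ℕ} (μ : Fin d → Measure ℝ) [∀ i, IsFiniteMeasure (μ i)] (s : Finset (Fin d)) :
    MeasurePreserving (fun p : (Fin d → ℝ) × (Fin d → ℝ) =>
      ((s.piecewise p.2 p.1, s.piecewise p.1 p.2) : (Fin d → ℝ) × (Fin d → ℝ)))
      ((Measure.pi μ).prod (Measure.pi μ)) ((Measure.pi μ).prod (Measure.pi μ)) := by
  classical
  have e := measurePreserving_arrowProdEquivProdArrow ℝ ℝ (Fin d) μ μ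
  have h := measurePreserving_pi (fun i => (μ i).prod (μ i)) (fun i => (μ i).prod (μ i))
    (f := fun i p => if i ∈ s then Prod.swap p else p) (by
      intro i
      by_cases hi : i ∈ s
      · simpa [hi] using Measure.measurePreserving_swap
      · simp only [hi, if_false]
        exact MeasurePreserving.id _)
  have := e.comp (h.comp (e.symm _))
  convert this using 1
  funext p
  ext i <;> by_cases hi : i ∈ s <;>
    simp [hi, MeasurableEquiv.arrowProdEquivProdArrow, Equiv.arrowProdEquivProdArrow]

lemma bst_swap_lint {d : ℕ} (μ : Fin d → Measure ℝ) [∀ i, IsFiniteMeasure (μ i)]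
    (s : Finset (Fin d)) (G : (Fin d → ℝ) → ℝ≥0∞) (hG : Measurable G) :
    ∫⁻ p : (Fin d → ℝ) × (Fin d → ℝ), G (s.piecewise p.2 p.1) ∂((Measure.pi μ).prod (Measure.pi μ))
      = Measure.pi μ Set.univ * ∫⁻ x, G x ∂(Measure.pi μ) := by
  have h := (bst_swap μ s).lintegral_comp (f := fun p => G p.1) (hG.comp measurable_fst)
  simp only at h
  rw [h, lintegral_prod (fun p : (Fin d → ℝ) × (Fin d → ℝ) => G p.1) (hG.comp measurable_fst).aemeasurable]
  simp only [lintegral_const]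
  rw [lintegral_mul_const _ hG, mul_comm]

/-- Line estimate. -/
lemma bst_line {d : ℕ} (x₀ : Fin d → ℝ) (δ : ℝ) (hδ : 0 < δ) (z : (Fin d → ℝ) → ℝ)
    (hz : ContDiff ℝ 1 z) (i : Fin d) (w : Fin d → ℝ) (t : ℝ)
    (hw : w i ∈ Set.Icc (x₀ i - δ / 2) (x₀ i + δ / 2))
    (ht : t ∈ Set.Icc (x₀ i - δ / 2) (x₀ i + δ / 2)) :
    ENNReal.ofReal ((z w - z (Function.update w i t)) ^ 2) ≤
      ENNReal.ofReal δ * ∫⁻ s, ENNReal.ofReal (grad d z (Function.update w i s) i ^ 2)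
        ∂(bstMu x₀ δ i) := by
  have hcu : Continuous (fun s : ℝ => Function.update w i s) :=
    continuous_const.update i continuous_id
  have hgc : Continuous (fun s : ℝ => grad d z (Function.update w i s) i) := by
    unfold grad
    exact ((hz.continuous_fderiv one_ne_zero).comp hcu).clm_apply continuous_const
  have hder : ∀ s : ℝ, HasDerivAt (fun s => z (Function.update w i s))
      (grad d z (Function.update w i s) i) s := by
    intro s
    have h1 := ((hz.differentiable one_ne_zero) (Function.update w i s)).hasFDerivAt
    exact h1.comp_hasDerivAt s (hasDerivAt_update w i s)
  have hftc : ∫ s in t..(w i), grad d z (Function.update w i s) i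
      = z w - z (Function.update w i t) := by
    rw [intervalIntegral.integral_eq_sub_of_hasDerivAt (fun s _ => hder s)
      (hgc.intervalIntegrable _ _)]
    simp
  have hcs := bst_cs (x₀ i - δ / 2) (x₀ i + δ / 2) (by linarith) _ hgc t (w i) ht hw
  rw [hftc, show x₀ i + δ / 2 - (x₀ i - δ / 2) = δ by ring] at hcs
  have hi : IntegrableOn (fun s => grad d z (Function.update w i s) i ^ 2)
      (Set.Icc (x₀ i - δ / 2) (x₀ i + δ / 2)) := (hgc.pow 2).continuousOn.integrableOn_Icc
  unfold bstMu
  rw [← ofReal_integral_eq_lintegral_ofReal hi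
    (Filter.Eventually.of_forall fun s => sq_nonneg _), ← ENNReal.ofReal_mul hδ.le]
  exact ENNReal.ofReal_le_ofReal hcs

lemma bst_grad_meas {d : ℕ} (z : (Fin d → ℝ) → ℝ) (hz : ContDiff ℝ 1 z) (i : Fin d) :
    Continuous (fun x => grad d z x i) := by
  unfold grad
  exact (hz.continuous_fderiv one_ne_zero).clm_apply continuous_const

lemma bst_ofReal_sq (a b c : ℝ) : ENNReal.ofReal ((a - c) ^ 2) ≤
    2 * ENNReal.ofReal ((a - b) ^ 2) + 2 * ENNReal.ofReal ((b - c) ^ 2) := by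
  rw [← ENNReal.ofReal_ofNat 2, ← ENNReal.ofReal_mul (by norm_num),
    ← ENNReal.ofReal_mul (by norm_num), ← ENNReal.ofReal_add (by positivity) (by positivity)]
  apply ENNReal.ofReal_le_ofReal
  nlinarith [sq_nonneg ((a - b) - (b - c))]

/-- The Dirichlet energy. -/
def bstE {d : ℕ} (x₀ : Fin d → ℝ) (δ : ℝ) (z : (Fin d → ℝ) → ℝ) : ℝ≥0∞ :=
  ∑ i, ∫⁻ x, ENNReal.ofReal (grad d z x i ^ 2) ∂(Measure.pi (bstMu x₀ δ))

lemma bst_ae_mem {d : ℕ} (x₀ : Fin d → ℝ) (δ : ℝ) :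
    ∀ᵐ x ∂(Measure.pi (bstMu x₀ δ)), ∀ i, x i ∈ Set.Icc (x₀ i - δ / 2) (x₀ i + δ / 2) := by
  rw [bst_pi_eq]
  filter_upwards [ae_restrict_mem (bst_cube_meas x₀ δ)] with x hx
  rw [bst_cube_eq] at hx
  exact fun i => hx i (Set.mem_univ i)

lemma bst_K_int {d : ℕ} (x₀ : Fin d → ℝ) (δ : ℝ) (i : Fin d)
    (g : (Fin d → ℝ) → ℝ≥0∞) (hg : Measurable g) :
    ∫⁻ x, (∫⁻ t, g (Function.update x i t) ∂(bstMu x₀ δ i)) ∂(Measure.pi (bstMu x₀ δ))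
      = ENNReal.ofReal δ * ∫⁻ x, g x ∂(Measure.pi (bstMu x₀ δ)) := by
  have := bst_fubini (bstMu x₀ δ) i (fun _ => 1) measurable_const g hg
  simpa [bstMu_univ] using this

lemma bst_tele {d : ℕ} (x₀ : Fin d → ℝ) (δ : ℝ) (hδ : 0 < δ) (z : (Fin d → ℝ) → ℝ)
    (hz : ContDiff ℝ 1 z) (s : Finset (Fin d)) :
    ∫⁻ p : (Fin d → ℝ) × (Fin d → ℝ), ENNReal.ofReal ((z p.1 - z (s.piecewise p.2 p.1)) ^ 2)
      ∂((Measure.pi (bstMu x₀ δ)).prod (Measure.pi (bstMu x₀ δ)))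
    ≤ 4 ^ s.card * (ENNReal.ofReal δ * (ENNReal.ofReal δ *
        (Measure.pi (bstMu x₀ δ) Set.univ * bstE x₀ δ z))) := by
  classical
  set μ := bstMu x₀ δ with hμ
  set P := (Measure.pi μ).prod (Measure.pi μ) with hP
  set B := (ENNReal.ofReal δ * (ENNReal.ofReal δ *
        (Measure.pi μ Set.univ * bstE x₀ δ z))) with hB
  have hm : ∀ s : Finset (Fin d), Measurable fun p : (Fin d → ℝ) × (Fin d → ℝ) =>
      s.piecewise p.2 p.1 := fun s => (measurable_fst.comp (bst_swap μ s).measurable)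
  have hae : ∀ᵐ p ∂P, (∀ i, p.1 i ∈ Set.Icc (x₀ i - δ / 2) (x₀ i + δ / 2)) ∧
      (∀ i, p.2 i ∈ Set.Icc (x₀ i - δ / 2) (x₀ i + δ / 2)) := by
    have h1 := Measure.quasiMeasurePreserving_fst (μ := Measure.pi μ) (ν := Measure.pi μ)
      |>.ae (bst_ae_mem x₀ δ)
    have h2 := Measure.quasiMeasurePreserving_snd (μ := Measure.pi μ) (ν := Measure.pi μ)
      |>.ae (bst_ae_mem x₀ δ)
    exact h1.and h2
  induction s using Finset.induction_on with
  | empty => simp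
  | insert i s hi ih =>
    have hg : Measurable fun x => ENNReal.ofReal (grad d z x i ^ 2) :=
      ((bst_grad_meas z hz i).pow 2).measurable.ennreal_ofReal
    have hstep : ∫⁻ p : (Fin d → ℝ) × (Fin d → ℝ), ENNReal.ofReal
        ((z (s.piecewise p.2 p.1) - z ((insert i s).piecewise p.2 p.1)) ^ 2) ∂P ≤ B := by
      calc _ ≤ ∫⁻ p : (Fin d → ℝ) × (Fin d → ℝ), ENNReal.ofReal δ *
            ∫⁻ t, ENNReal.ofReal (grad d z (Function.update (s.piecewise p.2 p.1) i t) i ^ 2)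
              ∂(μ i) ∂P := by
            apply lintegral_mono_ae
            filter_upwards [hae] with p hp
            rw [Finset.piecewise_insert]
            refine bst_line x₀ δ hδ z hz i _ _ ?_ (hp.2 i)
            simp [hi, hp.1 i]
        _ = ENNReal.ofReal δ * (Measure.pi μ Set.univ * (ENNReal.ofReal δ *
            ∫⁻ x, ENNReal.ofReal (grad d z x i ^ 2) ∂(Measure.pi μ))) := by
            have hmm : Measurable fun p : (Fin d → ℝ) × (Fin d → ℝ) => ∫⁻ t, ENNReal.ofReal
                (grad d z (Function.update (s.piecewise p.2 p.1) i t) i ^ 2) ∂(μ i) :=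
              (bst_K_meas μ i _ hg).comp (hm s)
            rw [lintegral_const_mul _ hmm,
              bst_swap_lint μ s (fun x => ∫⁻ t, ENNReal.ofReal
                (grad d z (Function.update x i t) i ^ 2) ∂(μ i)) (bst_K_meas μ i _ hg),
              bst_K_int x₀ δ i _ hg]
        _ ≤ B := by
            rw [hB, mul_left_comm (Measure.pi μ Set.univ)]
            gcongr
            exact Finset.single_le_sum (f := fun i => ∫⁻ x, ENNReal.ofReal (grad d z x i ^ 2)
              ∂(Measure.pi (bstMu x₀ δ))) (fun _ _ => zero_le) (Finset.mem_univ i)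
    have hzm := hz.continuous.measurable
    calc _ ≤ ∫⁻ p : (Fin d → ℝ) × (Fin d → ℝ),
          (2 * ENNReal.ofReal ((z p.1 - z (s.piecewise p.2 p.1)) ^ 2) + 2 * ENNReal.ofReal
        ((z (s.piecewise p.2 p.1) - z ((insert i s).piecewise p.2 p.1)) ^ 2)) ∂P :=
          lintegral_mono fun p => bst_ofReal_sq _ _ _
      _ = 2 * (∫⁻ p : (Fin d → ℝ) × (Fin d → ℝ),
            ENNReal.ofReal ((z p.1 - z (s.piecewise p.2 p.1)) ^ 2) ∂P) +
          2 * ∫⁻ p : (Fin d → ℝ) × (Fin d → ℝ), ENNReal.ofReal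
            ((z (s.piecewise p.2 p.1) - z ((insert i s).piecewise p.2 p.1)) ^ 2) ∂P := by
          have m1 : Measurable fun p : (Fin d → ℝ) × (Fin d → ℝ) =>
              ENNReal.ofReal ((z p.1 - z (s.piecewise p.2 p.1)) ^ 2) :=
            (((hzm.comp measurable_fst).sub (hzm.comp (hm s))).pow_const 2).ennreal_ofReal
          have m2 : Measurable fun p : (Fin d → ℝ) × (Fin d → ℝ) => ENNReal.ofReal
              ((z (s.piecewise p.2 p.1) - z ((insert i s).piecewise p.2 p.1)) ^ 2) :=
            (((hzm.comp (hm s)).sub (hzm.comp (hm (insert i s)))).pow_const 2).ennreal_ofReal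
          rw [lintegral_add_left (m1.const_mul 2), lintegral_const_mul _ m1,
            lintegral_const_mul _ m2]
      _ ≤ 2 * (4 ^ s.card * B) + 2 * B := by gcongr
      _ ≤ 2 * (4 ^ s.card * B) + 2 * (4 ^ s.card * B) := by
          gcongr
          exact le_mul_of_one_le_left zero_le (one_le_pow₀ (by norm_num))
      _ = 4 ^ (insert i s).card * B := by
          rw [Finset.card_insert_of_notMem hi, pow_succ]; ring

lemma bst_int_pi {d : ℕ} (x₀ : Fin d → ℝ) (δ : ℝ) (f : (Fin d → ℝ) → ℝ) (hf : Continuous f) :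
    Integrable f (Measure.pi (bstMu x₀ δ)) := by
  rw [bst_pi_eq]
  exact hf.continuousOn.integrableOn_compact (bst_cube_compact x₀ δ)

lemma bst_poincare {d : ℕ} (x₀ : Fin d → ℝ) (δ : ℝ) (hδ : 0 < δ) (z : (Fin d → ℝ) → ℝ)
    (hz : ContDiff ℝ 1 z) (h0 : ∫ x, z x ∂(Measure.pi (bstMu x₀ δ)) = 0) :
    ∫⁻ x, ENNReal.ofReal (z x ^ 2) ∂(Measure.pi (bstMu x₀ δ))
      ≤ 4 ^ d * (ENNReal.ofReal δ * (ENNReal.ofReal δ * bstE x₀ δ z)) := by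
  classical
  have ht := bst_tele x₀ δ hδ z hz Finset.univ
  set ν := Measure.pi (bstMu x₀ δ) with hν
  have hM0 : ν Set.univ ≠ 0 := by
    rw [hν, Measure.pi_univ]
    simp [bstMu_univ, hδ]
  have hMt : ν Set.univ ≠ ∞ := measure_ne_top _ _
  have hzc := hz.continuous
  have hpt : ∀ x, ν Set.univ * ENNReal.ofReal (z x ^ 2)
      ≤ ∫⁻ y, ENNReal.ofReal ((z x - z y) ^ 2) ∂ν := by
    intro x
    rw [← ofReal_integral_eq_lintegral_ofReal
      (bst_int_pi x₀ δ (fun y => (z x - z y) ^ 2) (by fun_prop))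
      (Filter.Eventually.of_forall fun s => sq_nonneg _),
      ← ENNReal.ofReal_toReal hMt, ← ENNReal.ofReal_mul ENNReal.toReal_nonneg]
    apply ENNReal.ofReal_le_ofReal
    have e : ∀ y, (z x - z y) ^ 2 = (z x ^ 2 - 2 * z x * z y) + z y ^ 2 := fun y => by ring
    simp only [e]
    rw [integral_add (bst_int_pi x₀ δ (fun y => z x ^ 2 - 2 * z x * z y) (by fun_prop))
      (bst_int_pi x₀ δ (fun y => z y ^ 2) (by fun_prop)),
      integral_sub (bst_int_pi x₀ δ (fun y => z x ^ 2) (by fun_prop))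
      (bst_int_pi x₀ δ (fun y => 2 * z x * z y) (by fun_prop)), integral_const_mul, h0]
    have : 0 ≤ ∫ y, z y ^ 2 ∂ν := integral_nonneg fun y => sq_nonneg _
    simp only [integral_const, smul_eq_mul, Measure.real]
    linarith
  have hm : Measurable fun p : (Fin d → ℝ) × (Fin d → ℝ) =>
      ENNReal.ofReal ((z p.1 - z p.2) ^ 2) := by
    have : Continuous fun p : (Fin d → ℝ) × (Fin d → ℝ) => (z p.1 - z p.2) ^ 2 := by fun_prop
    exact this.measurable.ennreal_ofReal
  simp only [Finset.piecewise_univ, Finset.card_univ, Fintype.card_fin] at ht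
  rw [lintegral_prod _ hm.aemeasurable] at ht
  have h1 : ν Set.univ * ∫⁻ x, ENNReal.ofReal (z x ^ 2) ∂ν ≤
      ν Set.univ * (4 ^ d * (ENNReal.ofReal δ * (ENNReal.ofReal δ * bstE x₀ δ z))) := by
    rw [← lintegral_const_mul' _ _ hMt]
    refine (lintegral_mono hpt).trans (ht.trans (le_of_eq ?_))
    ring
  exact (ENNReal.mul_le_mul_iff_right hM0 hMt).1 h1

/-- The weight selecting the strip in direction `i`. -/
def bstPhi (c r : ℝ) : ℝ → ℝ≥0∞ := Set.indicator {t | r / 2 < |t - c|} 1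

lemma bstPhi_meas (c r : ℝ) : Measurable (bstPhi c r) :=
  measurable_one.indicator (measurableSet_lt measurable_const (by fun_prop))

lemma bstPhi_int {d : ℕ} (x₀ : Fin d → ℝ) (ε δ : ℝ) (hε : 0 < ε) (i : Fin d) :
    ∫⁻ t, bstPhi (x₀ i) (δ - ε) t ∂(bstMu x₀ δ i) ≤ ENNReal.ofReal ε := by
  have hs : MeasurableSet {t : ℝ | (δ - ε) / 2 < |t - x₀ i|} :=
    measurableSet_lt measurable_const (by fun_prop)
  unfold bstPhi bstMu
  rw [lintegral_indicator_one hs, Measure.restrict_apply hs]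
  calc _ ≤ volume (Set.Icc (x₀ i - δ / 2) (x₀ i - δ / 2 + ε / 2) ∪
        Set.Icc (x₀ i + δ / 2 - ε / 2) (x₀ i + δ / 2)) := by
        apply measure_mono
        rintro t ⟨h1, h2, h3⟩
        have h1' : (δ - ε) / 2 < |t - x₀ i| := h1
        rcases lt_abs.1 h1' with h | h
        · right; constructor <;> linarith
        · left; constructor <;> linarith
    _ ≤ _ := (measure_union_le _ _)
    _ = ENNReal.ofReal ε := by
        rw [Real.volume_Icc, Real.volume_Icc, ← ENNReal.ofReal_add (by linarith) (by linarith)]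
        congr 1; ring

lemma bst_strip_i {d : ℕ} (x₀ : Fin d → ℝ) (ε δ : ℝ) (hε : 0 < ε) (hδ : 0 < δ)
    (z : (Fin d → ℝ) → ℝ) (hz : ContDiff ℝ 1 z)
    (h0 : ∫ x, z x ∂(Measure.pi (bstMu x₀ δ)) = 0) (i : Fin d) :
    ENNReal.ofReal δ * ∫⁻ x, bstPhi (x₀ i) (δ - ε) (x i) * ENNReal.ofReal (z x ^ 2)
        ∂(Measure.pi (bstMu x₀ δ))
      ≤ ENNReal.ofReal ε * ((2 + 2 * 4 ^ d) *
        (ENNReal.ofReal δ * (ENNReal.ofReal δ * bstE x₀ δ z))) := by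
  have hP := bst_poincare x₀ δ hδ z hz h0
  have hg : Measurable fun x => ENNReal.ofReal (grad d z x i ^ 2) :=
    ((bst_grad_meas z hz i).pow 2).measurable.ennreal_ofReal
  have hzm : Measurable fun x => ENNReal.ofReal (z x ^ 2) :=
    (hz.continuous.pow 2).measurable.ennreal_ofReal
  set G : (Fin d → ℝ) → ℝ≥0∞ := fun x =>
    2 * (ENNReal.ofReal δ * (ENNReal.ofReal δ * ENNReal.ofReal (grad d z x i ^ 2)))
      + 2 * ENNReal.ofReal (z x ^ 2) with hG
  have hG1 : Measurable fun x => 2 * (ENNReal.ofReal δ * (ENNReal.ofReal δ *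
      ENNReal.ofReal (grad d z x i ^ 2))) := ((hg.const_mul _).const_mul _).const_mul _
  have hGm : Measurable G := hG1.add (hzm.const_mul _)
  have hpt : ∀ x : Fin d → ℝ, (∀ i, x i ∈ Set.Icc (x₀ i - δ / 2) (x₀ i + δ / 2)) →
      ENNReal.ofReal δ * ENNReal.ofReal (z x ^ 2) ≤
        ∫⁻ t, G (Function.update x i t) ∂(bstMu x₀ δ i) := by
    intro x hx
    have hgu : Measurable fun t => ENNReal.ofReal (grad d z (Function.update x i t) i ^ 2) :=
      hg.comp (measurable_update x)
    have hzu : Measurable fun t => ENNReal.ofReal (z (Function.update x i t) ^ 2) :=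
      hzm.comp (measurable_update x)
    set K := ∫⁻ s, ENNReal.ofReal (grad d z (Function.update x i s) i ^ 2) ∂(bstMu x₀ δ i) with hK
    calc ENNReal.ofReal δ * ENNReal.ofReal (z x ^ 2)
        = ∫⁻ t, ENNReal.ofReal (z x ^ 2) ∂(bstMu x₀ δ i) := by
          rw [lintegral_const, bstMu_univ, mul_comm]
      _ ≤ ∫⁻ t, (2 * (ENNReal.ofReal δ * K) +
            2 * ENNReal.ofReal (z (Function.update x i t) ^ 2)) ∂(bstMu x₀ δ i) := by
          apply lintegral_mono_ae
          have hmem : ∀ᵐ t ∂(bstMu x₀ δ i), t ∈ Set.Icc (x₀ i - δ / 2) (x₀ i + δ / 2) :=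
            ae_restrict_mem measurableSet_Icc
          filter_upwards [hmem] with t ht
          have h1 := bst_ofReal_sq (z x) (z (Function.update x i t)) 0
          simp only [sub_zero] at h1
          refine h1.trans ?_
          gcongr
          exact bst_line x₀ δ hδ z hz i x t (hx i) ht
      _ = ∫⁻ t, G (Function.update x i t) ∂(bstMu x₀ δ i) := by
          simp only [hG]
          have hgu' : Measurable fun t => 2 * (ENNReal.ofReal δ * (ENNReal.ofReal δ *
            ENNReal.ofReal (grad d z (Function.update x i t) i ^ 2))) :=
              hG1.comp (measurable_update x)
          rw [lintegral_add_left measurable_const, lintegral_add_left hgu',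
            lintegral_const_mul _ ((hgu.const_mul _).const_mul _),
            lintegral_const_mul _ (hgu.const_mul _),
            lintegral_const_mul _ hgu, lintegral_const, bstMu_univ]
          ring
  calc _ = ∫⁻ x, bstPhi (x₀ i) (δ - ε) (x i) * (ENNReal.ofReal δ * ENNReal.ofReal (z x ^ 2))
        ∂(Measure.pi (bstMu x₀ δ)) := by
        rw [← lintegral_const_mul' _ _ ENNReal.ofReal_ne_top]
        congr 1; funext x; ring
    _ ≤ ∫⁻ x, bstPhi (x₀ i) (δ - ε) (x i) * (∫⁻ t, G (Function.update x i t) ∂(bstMu x₀ δ i))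
        ∂(Measure.pi (bstMu x₀ δ)) := by
        apply lintegral_mono_ae
        filter_upwards [bst_ae_mem x₀ δ] with x hx
        gcongr
        exact hpt x hx
    _ = (∫⁻ t, bstPhi (x₀ i) (δ - ε) t ∂(bstMu x₀ δ i)) *
          ∫⁻ x, G x ∂(Measure.pi (bstMu x₀ δ)) :=
        bst_fubini (bstMu x₀ δ) i _ (bstPhi_meas _ _) G hGm
    _ ≤ ENNReal.ofReal ε * (2 * (ENNReal.ofReal δ * (ENNReal.ofReal δ * bstE x₀ δ z)) +
          2 * (4 ^ d * (ENNReal.ofReal δ * (ENNReal.ofReal δ * bstE x₀ δ z)))) := by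
        gcongr
        · exact bstPhi_int x₀ ε δ hε i
        · simp only [hG]
          rw [lintegral_add_left hG1, lintegral_const_mul _ ((hg.const_mul _).const_mul _),
            lintegral_const_mul _ (hg.const_mul _), lintegral_const_mul _ hg,
            lintegral_const_mul _ hzm]
          gcongr
          exact Finset.single_le_sum (f := fun i => ∫⁻ x, ENNReal.ofReal (grad d z x i ^ 2)
              ∂(Measure.pi (bstMu x₀ δ))) (fun _ _ => zero_le) (Finset.mem_univ i)
    _ = _ := by ring

lemma bst_strip {d : ℕ} (x₀ : Fin d → ℝ) (ε δ : ℝ) (hε : 0 < ε) (hδ : 0 < δ)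
    (z : (Fin d → ℝ) → ℝ) (hz : ContDiff ℝ 1 z)
    (h0 : ∫ x, z x ∂(Measure.pi (bstMu x₀ δ)) = 0) :
    ENNReal.ofReal δ * ∫⁻ x in cube d x₀ δ \ cube d x₀ (δ - ε), ENNReal.ofReal (z x ^ 2)
      ≤ d * (ENNReal.ofReal ε * ((2 + 2 * 4 ^ d) *
        (ENNReal.ofReal δ * (ENNReal.ofReal δ * bstE x₀ δ z)))) := by
  have hzm : Measurable fun x => ENNReal.ofReal (z x ^ 2) :=
    (hz.continuous.pow 2).measurable.ennreal_ofReal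
  have hm : ∀ i : Fin d, Measurable fun x : Fin d → ℝ =>
      bstPhi (x₀ i) (δ - ε) (x i) * ENNReal.ofReal (z x ^ 2) := fun i =>
    ((bstPhi_meas _ _).comp (measurable_pi_apply i)).mul hzm
  have hle : ∫⁻ x in cube d x₀ δ \ cube d x₀ (δ - ε), ENNReal.ofReal (z x ^ 2) ≤
      ∑ i, ∫⁻ x, bstPhi (x₀ i) (δ - ε) (x i) * ENNReal.ofReal (z x ^ 2)
        ∂(Measure.pi (bstMu x₀ δ)) := by
    rw [← lintegral_finsetSum _ (fun i _ => hm i), bst_pi_eq]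
    have hmd := (bst_cube_meas x₀ δ).diff (bst_cube_meas x₀ (δ - ε))
    refine le_trans ?_ (lintegral_mono_set (Set.sdiff_subset (t := cube d x₀ (δ - ε))))
    refine setLIntegral_mono' hmd ?_
    rintro x ⟨hx, hx'⟩
    simp only [cube, Set.mem_ofPred_eq, not_forall, not_le] at hx'
    obtain ⟨i, hi⟩ := hx'
    have h1 : bstPhi (x₀ i) (δ - ε) (x i) = 1 := by
      unfold bstPhi
      rw [Set.indicator_of_mem]
      · rfl
      · exact hi
    calc ENNReal.ofReal (z x ^ 2)
        = bstPhi (x₀ i) (δ - ε) (x i) * ENNReal.ofReal (z x ^ 2) := by rw [h1, one_mul]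
      _ ≤ _ := Finset.single_le_sum (f := fun i => bstPhi (x₀ i) (δ - ε) (x i) *
          ENNReal.ofReal (z x ^ 2)) (fun _ _ => zero_le) (Finset.mem_univ i)
  calc _ ≤ ENNReal.ofReal δ * ∑ i, ∫⁻ x, bstPhi (x₀ i) (δ - ε) (x i) * ENNReal.ofReal (z x ^ 2)
        ∂(Measure.pi (bstMu x₀ δ)) := by gcongr
    _ = ∑ i, ENNReal.ofReal δ * ∫⁻ x, bstPhi (x₀ i) (δ - ε) (x i) * ENNReal.ofReal (z x ^ 2)
        ∂(Measure.pi (bstMu x₀ δ)) := Finset.mul_sum _ _ _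
    _ ≤ ∑ _i : Fin d, (ENNReal.ofReal ε * ((2 + 2 * 4 ^ d) *
        (ENNReal.ofReal δ * (ENNReal.ofReal δ * bstE x₀ δ z)))) :=
        Finset.sum_le_sum fun i _ => bst_strip_i x₀ ε δ hε hδ z hz h0 i
    _ = _ := by simp

lemma bst_global {d : ℕ} (x₀ : Fin d → ℝ) (ε δ : ℝ) (hε : 0 < ε) (hδ : 0 < δ)
    (z : (Fin d → ℝ) → ℝ) (hz : ContDiff ℝ 1 z) (h0 : ∫ x in cube d x₀ δ, z x = 0) :
    (∫ x in cube d x₀ δ \ cube d x₀ (δ - ε), z x ^ 2)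
        ≤ (d * (2 + 2 * 4 ^ d)) * ε * δ * ∫ x in cube d x₀ δ, ∑ i, grad d z x i ^ 2 := by
  rw [← bst_pi_eq] at h0
  have h := bst_strip x₀ ε δ hε hδ z hz h0
  have hc : Continuous fun x => z x ^ 2 := hz.continuous.pow 2
  have hgc : ∀ i, Continuous fun x => grad d z x i ^ 2 := fun i => (bst_grad_meas z hz i).pow 2
  have hint : IntegrableOn (fun x => z x ^ 2) (cube d x₀ δ \ cube d x₀ (δ - ε)) :=
    (hc.continuousOn.integrableOn_compact (bst_cube_compact x₀ δ)).mono_set Set.sdiff_subset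
  have hE : bstE x₀ δ z = ENNReal.ofReal (∫ x in cube d x₀ δ, ∑ i, grad d z x i ^ 2) := by
    rw [← bst_pi_eq, integral_finsetSum _ (fun i _ => bst_int_pi x₀ δ _ (hgc i)),
      ENNReal.ofReal_sum_of_nonneg (fun i _ => integral_nonneg fun x => sq_nonneg _)]
    unfold bstE
    refine Finset.sum_congr rfl fun i _ => ?_
    rw [ofReal_integral_eq_lintegral_ofReal (bst_int_pi x₀ δ _ (hgc i))
      (Filter.Eventually.of_forall fun s => sq_nonneg _)]
  have hE0 : 0 ≤ ∫ x in cube d x₀ δ, ∑ i, grad d z x i ^ 2 :=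
    integral_nonneg fun x => Finset.sum_nonneg fun i _ => sq_nonneg _
  rw [hE, ← ofReal_integral_eq_lintegral_ofReal hint
      (Filter.Eventually.of_forall fun s => sq_nonneg _)] at h
  set S := ∫ x in cube d x₀ δ \ cube d x₀ (δ - ε), z x ^ 2
  set E := ∫ x in cube d x₀ δ, ∑ i, grad d z x i ^ 2
  have e1 : (d : ℝ≥0∞) = ENNReal.ofReal d := (ENNReal.ofReal_natCast d).symm
  have e2 : (2 + 2 * 4 ^ d : ℝ≥0∞) = ENNReal.ofReal (2 + 2 * 4 ^ d) := by
    rw [ENNReal.ofReal_add (by norm_num) (by positivity), ENNReal.ofReal_mul (by norm_num),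
      ENNReal.ofReal_pow (by norm_num)]
    simp
  rw [e1, e2, ← ENNReal.ofReal_mul hδ.le, ← ENNReal.ofReal_mul hδ.le, ← ENNReal.ofReal_mul hδ.le,
    ← ENNReal.ofReal_mul (by positivity), ← ENNReal.ofReal_mul hε.le,
    ← ENNReal.ofReal_mul (by positivity), ENNReal.ofReal_le_ofReal_iff (by positivity)] at h
  refine le_of_mul_le_mul_left (h.trans (le_of_eq ?_)) hδ
  ring

open scoped Manifold ContDiff Topology in
lemma bst_extend {d : ℕ} (Q U : Set (Fin d → ℝ)) (hQ : IsClosed Q) (hU : IsOpen U) (hQU : Q ⊆ U)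
    (z : (Fin d → ℝ) → ℝ) (hz : ContDiffOn ℝ 1 z U) :
    ∃ w : (Fin d → ℝ) → ℝ, ContDiff ℝ 1 w ∧ ∀ x ∈ Q, w =ᶠ[𝓝 x] z := by
  obtain ⟨f, hf0, hf1, -⟩ := exists_contMDiffMap_zero_one_nhds_of_isClosed (n := 1)
    (𝓘(ℝ, Fin d → ℝ)) (hU.isClosed_compl) hQ
    (Set.disjoint_left.2 fun x hx hx' => hx (hQU hx'))
  have hfc : ContDiff ℝ 1 f := f.contMDiff.contDiff
  rw [Filter.Eventually, mem_nhdsSet_iff_forall] at hf0 hf1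
  refine ⟨fun x => f x * z x, ?_, ?_⟩
  · rw [contDiff_iff_contDiffAt]
    intro x
    by_cases hx : x ∈ U
    · exact hfc.contDiffAt.mul (hz.contDiffAt (hU.mem_nhds hx))
    · have : (fun x => f x * z x) =ᶠ[𝓝 x] fun _ => 0 := by
        filter_upwards [hf0 x hx] with y hy
        have hy' : f y = 0 := hy
        simp [hy']
      exact contDiffAt_const.congr_of_eventuallyEq this
  · intro x hx
    filter_upwards [hf1 x hx] with y hy
    have hy' : f y = 1 := hy
    simp [hy']

/-- Scaled boundary-strip trace inequality for mean-zero `H¹` functions on a cube. -/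
theorem boundary_strip_trace_inequality
    (d : ℕ) (hd : 1 ≤ d) :
    ∃ C : ℝ, 0 < C ∧ ∀ (ε δ : ℝ), 0 < ε → ε ≤ δ → ∀ (x₀ : Fin d → ℝ)
      (z : (Fin d → ℝ) → ℝ),
      (∃ U : Set (Fin d → ℝ), IsOpen U ∧ cube d x₀ δ ⊆ U ∧ ContDiffOn ℝ 1 z U) →
      (∫ x in cube d x₀ δ, z x) = 0 →
      (∫ x in cube d x₀ δ \ cube d x₀ (δ - ε), z x ^ 2)
        ≤ C * ε * δ * ∫ x in cube d x₀ δ, ∑ i, grad d z x i ^ 2 := by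
  refine ⟨d * (2 + 2 * 4 ^ d), ?_, ?_⟩
  · have : (0 : ℝ) < d := by exact_mod_cast hd
    positivity
  rintro ε δ hε hεδ x₀ z ⟨U, hU, hQU, hz⟩ h0
  have hδ : 0 < δ := hε.trans_le hεδ
  obtain ⟨w, hw, hwz⟩ := bst_extend (cube d x₀ δ) U (bst_cube_compact x₀ δ).isClosed hU hQU z hz
  have hQm := bst_cube_meas x₀ δ
  have h0' : ∫ x in cube d x₀ δ, w x = 0 := by
    rw [← h0]
    exact setIntegral_congr_fun hQm fun x hx => (hwz x hx).eq_of_nhds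
  have h := bst_global x₀ ε δ hε hδ w hw h0'
  have e1 : (∫ x in cube d x₀ δ \ cube d x₀ (δ - ε), w x ^ 2)
      = ∫ x in cube d x₀ δ \ cube d x₀ (δ - ε), z x ^ 2 :=
    setIntegral_congr_fun (hQm.diff (bst_cube_meas x₀ (δ - ε))) fun x hx => by
      simp only [(hwz x hx.1).eq_of_nhds]
  have e2 : (∫ x in cube d x₀ δ, ∑ i, grad d w x i ^ 2)
      = ∫ x in cube d x₀ δ, ∑ i, grad d z x i ^ 2 :=
    setIntegral_congr_fun hQm fun x hx => by
      simp only [grad, (hwz x hx).fderiv_eq]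
  rwa [e1, e2] at h
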